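/- arXiv:2605.21366 — 9 statements merged into one kernel-verified Lean document; each statement's English description precedes it below -/
import Mathlib

section
/- Let 𝓛 be a passage-time kernel satisfying the landscape growth bound with some constant C > 0, and let 𝔥 be an eternal solution for 𝓛. Then for all t' < t'' and all a > 0, lim_{|y|→∞} |y|^{−1} ( sup_{t' ≤ t ≤ t''} 𝔥(y,t) − a y² ) = −∞; equivalently, for every b > 0 there exists R > 0 such that 𝔥(y,t) ≤ a y² − b|y| for all t ∈ [t',t''] and all y with |y| ≥ R. -/
/-! The supremum defining `h 0 s` at an earlier time `s` dominates each of its terms, so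
`h y t ≤ h 0 s - L 0 s y t ≤ h 0 s + y² / (t - s) + error`. Since `s` may be taken arbitrarily far
in the past, the coefficient `1 / (t - s)` can be made at most `a / 2` for all `t ≥ t'`. The error
term of the landscape bound is at most linear in `|y|` (lemma `error_le`), so the remaining
`(a / 2) y²` absorbs it together with `b |y|` and the constant `h 0 s`. -/

/-- An eternal solution for a passage-time kernel `L`. -/
def EternalSolution (L : ℝ → ℝ → ℝ → ℝ → ℝ) (h : ℝ → ℝ → ℝ) : Prop :=
  ∀ x s t : ℝ, s < t → IsLUB {v : ℝ | ∃ y : ℝ, v = L x s y t + h y t} (h x s)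

/-- The landscape growth bound with constant `C`. -/
def LandscapeBound (L : ℝ → ℝ → ℝ → ℝ → ℝ) (C : ℝ) : Prop :=
  ∀ x s y t : ℝ, s < t →
    |L x s y t + (y - x) ^ 2 / (t - s)| ≤
      C * |t - s| ^ ((1 : ℝ) / 3) *
        (Real.log ((2 * Real.sqrt (x ^ 2 + s ^ 2 + y ^ 2 + t ^ 2) + 2) / (t - s))) ^
          ((4 : ℝ) / 3) *
        (Real.log (Real.sqrt (x ^ 2 + s ^ 2 + y ^ 2 + t ^ 2) + 2)) ^ ((2 : ℝ) / 3)

/-- The product of logarithms in the landscape bound is at most linear in `N`, which stands for the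
norm of the space-time quadruple. For a time gap `d ∈ [1, 2N + 2]` the first logarithm lies in
`[0, log (2N + 2)]`, and `log² z ≤ 4 z`. -/
lemma error_le (N d : ℝ) (hd : 1 ≤ d) (hdN : d ≤ 2 * N + 2) (hN : 0 ≤ N) :
    (Real.log ((2 * N + 2) / d)) ^ ((4 : ℝ) / 3) * (Real.log (N + 2)) ^ ((2 : ℝ) / 3)
      ≤ 4 * (2 * N + 2) := by
  have hZ : 0 < 2 * N + 2 := by linarith
  have hd0 : 0 < d := by linarith
  have h1 : 1 ≤ (2 * N + 2) / d := by rwa [le_div_iff₀ hd0, one_mul]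
  have h2 : (2 * N + 2) / d ≤ 2 * N + 2 := div_le_self hZ.le hd
  have l0 : 0 ≤ Real.log ((2 * N + 2) / d) := Real.log_nonneg h1
  have l1 : Real.log ((2 * N + 2) / d) ≤ Real.log (2 * N + 2) :=
    Real.log_le_log (by linarith) h2
  have m0 : 0 ≤ Real.log (N + 2) := Real.log_nonneg (by linarith)
  have m1 : Real.log (N + 2) ≤ Real.log (2 * N + 2) := Real.log_le_log (by linarith) (by linarith)
  have z0 : 0 ≤ Real.log (2 * N + 2) := l0.trans l1
  calc _ ≤ (Real.log (2 * N + 2)) ^ ((4 : ℝ) / 3) * (Real.log (2 * N + 2)) ^ ((2 : ℝ) / 3) := by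
        gcongr
    _ = (Real.log (2 * N + 2)) ^ 2 := by
        rw [← Real.rpow_add_of_nonneg z0 (by norm_num) (by norm_num), ← Real.rpow_natCast]
        norm_num
    _ ≤ (2 * Real.sqrt (2 * N + 2)) ^ 2 := by
        have h3 := Real.log_le_self (Real.sqrt_nonneg (2 * N + 2))
        rw [Real.log_sqrt hZ.le] at h3
        exact pow_le_pow_left₀ z0 (by linarith) 2
    _ = 4 * (2 * N + 2) := by rw [mul_pow, Real.sq_sqrt hZ.le]; norm_num

/-- Sub-quadratic growth of eternal solutions: uniformly over a compact time window,
`𝔥(y,t) − a y²` is eventually below `−b|y|` for every `a, b > 0`. -/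
theorem stmt_4 (L : ℝ → ℝ → ℝ → ℝ → ℝ) (C : ℝ) (hC : 0 < C)
    (hL : LandscapeBound L C) (h : ℝ → ℝ → ℝ) (hh : EternalSolution L h) :
    ∀ t' t'' : ℝ, t' < t'' → ∀ a : ℝ, 0 < a → ∀ b : ℝ, 0 < b → ∃ R : ℝ, 0 < R ∧
      ∀ y t : ℝ, t' ≤ t → t ≤ t'' → R ≤ |y| → h y t ≤ a * y ^ 2 - b * |y| := by
  intro t' t'' htt a ha b hb
  -- The gap `t - s ≥ 1 + 2 / a` gives both `1 ≤ t - s` and `1 / (t - s) ≤ a / 2`.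
  obtain ⟨s, hs⟩ : ∃ s, s = t' - 1 - 2 / a := ⟨_, rfl⟩
  have h2a : 0 < 2 / a := by positivity
  obtain ⟨M, hM⟩ : ∃ M, M = |s| + (|t'| + |t''|) := ⟨_, rfl⟩
  have hM0 : 0 ≤ M := by rw [hM]; positivity
  obtain ⟨K, hK⟩ : ∃ K, K = 4 * (C * (t'' - s)) := ⟨_, rfl⟩
  have hD : 1 ≤ t'' - s := by linarith
  have hK0 : 0 ≤ K := by rw [hK]; positivity
  obtain ⟨E, hE⟩ : ∃ E, E = b + 2 * K + |h 0 s| + K * (2 * M + 2) := ⟨_, rfl⟩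
  have hE0 : 0 ≤ E := by rw [hE]; positivity
  refine ⟨1 + 2 * E / a, by positivity, fun y t h1 h2 hy => ?_⟩
  have hst : 1 ≤ t - s := by linarith
  have hlub := (hh 0 s t (by linarith)).1 ⟨y, rfl⟩
  have hb := (abs_le.1 (hL 0 s y t (by linarith))).1
  obtain ⟨N, hN⟩ : ∃ N, N = Real.sqrt ((0:ℝ) ^ 2 + s ^ 2 + y ^ 2 + t ^ 2) := ⟨_, rfl⟩
  rw [← hN] at hb
  have hN0 : 0 ≤ N := hN ▸ Real.sqrt_nonneg _
  have hsN : |s| ≤ N := by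
    rw [hN]; exact Real.abs_le_sqrt (by linarith [sq_nonneg y, sq_nonneg t])
  have htN : |t| ≤ N := by
    rw [hN]; exact Real.abs_le_sqrt (by linarith [sq_nonneg y, sq_nonneg s])
  have htM : |t| ≤ |t'| + |t''| := by
    rw [abs_le]
    constructor
    · linarith [neg_abs_le t', abs_nonneg t'']
    · linarith [le_abs_self t'', abs_nonneg t']
  have hNM : N ≤ |y| + M := by
    rw [hN]
    apply Real.sqrt_le_iff.2 ⟨by positivity, ?_⟩
    have e1 := sq_abs s
    have e2 := sq_abs y
    have e3 := sq_abs t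
    have : (|y| + (|s| + |t|)) ^ 2 ≤ (|y| + M) ^ 2 := by
      apply pow_le_pow_left₀ (by positivity); linarith
    have p1 := mul_nonneg (abs_nonneg y) (abs_nonneg s)
    have p2 := mul_nonneg (abs_nonneg y) (abs_nonneg t)
    have p3 := mul_nonneg (abs_nonneg s) (abs_nonneg t)
    have e4 : (|y| + (|s| + |t|)) ^ 2 = |y| ^ 2 + |s| ^ 2 + |t| ^ 2
        + 2 * (|y| * |s|) + 2 * (|y| * |t|) + 2 * (|s| * |t|) := by ring
    linarith
  have herr := error_le N (t - s) hst
    (by linarith [le_abs_self t, neg_abs_le s]) hN0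
  have hpow : |t - s| ^ ((1 : ℝ) / 3) ≤ t'' - s := by
    rw [abs_of_nonneg (by linarith)]
    calc (t - s) ^ ((1 : ℝ) / 3) ≤ (t - s) ^ (1 : ℝ) :=
          Real.rpow_le_rpow_of_exponent_le hst (by norm_num)
      _ ≤ t'' - s := by rw [Real.rpow_one]; linarith
  have herr2 : C * |t - s| ^ ((1 : ℝ) / 3) *
        (Real.log ((2 * N + 2) / (t - s))) ^ ((4 : ℝ) / 3) *
        (Real.log (N + 2)) ^ ((2 : ℝ) / 3) ≤ K * (2 * (|y| + M) + 2) := by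
    rw [mul_assoc]
    calc _ ≤ (C * |t - s| ^ ((1 : ℝ) / 3)) * (4 * (2 * N + 2)) := by gcongr
      _ ≤ (C * (t'' - s)) * (4 * (2 * (|y| + M) + 2)) := by gcongr
      _ = K * (2 * (|y| + M) + 2) := by rw [hK]; ring
  have hquad : (y - 0) ^ 2 / (t - s) ≤ a / 2 * y ^ 2 := by
    rw [sub_zero, div_le_iff₀ (by linarith)]
    have : 1 ≤ a / 2 * (t - s) := by
      calc (1 : ℝ) = a / 2 * (2 / a) := by field_simp
        _ ≤ a / 2 * (t - s) := by
          apply mul_le_mul_of_nonneg_left _ (by positivity); linarith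
    calc y ^ 2 ≤ (a / 2 * (t - s)) * y ^ 2 := le_mul_of_one_le_left (sq_nonneg y) this
      _ = a / 2 * y ^ 2 * (t - s) := by ring
  have hy1 : 1 ≤ |y| := le_trans (by linarith [show 0 ≤ 2 * E / a by positivity]) hy
  -- For `|y| ≥ 1` all lower-order terms are at most `E |y|`, and `E ≤ (a / 2) |y|`.
  have hyE : E ≤ a / 2 * |y| := by
    calc E = a / 2 * (2 * E / a) := by field_simp
      _ ≤ a / 2 * |y| := by
        apply mul_le_mul_of_nonneg_left _ (by positivity); linarith
  have hyE2 : E * |y| ≤ a / 2 * y ^ 2 := by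
    calc E * |y| ≤ a / 2 * |y| * |y| := mul_le_mul_of_nonneg_right hyE (abs_nonneg y)
      _ = a / 2 * y ^ 2 := by rw [mul_assoc, abs_mul_abs_self, sq]
  have hlow : |h 0 s| + K * (2 * M + 2) ≤ (|h 0 s| + K * (2 * M + 2)) * |y| :=
    le_mul_of_one_le_right (by positivity) hy1
  have hEy : E * |y| = b * |y| + 2 * K * |y| + (|h 0 s| + K * (2 * M + 2)) * |y| := by
    rw [hE]; ring
  linarith [le_abs_self (h 0 s)]
end

section
/- Let 𝓛 be a passage-time kernel satisfying the landscape growth bound with some constant C > 0, and let 𝔥 be an eternal solution for 𝓛. Then for any x ∈ ℝ and any s < t, lim_{|y|→∞} |y|^{−1} ( 𝓛(x,s;y,t) + 𝔥(y,t) ) = −∞. Consequently, the set of maximizers { y ∈ ℝ : 𝓛(x,s;y,t) + 𝔥(y,t) = 𝔥(x,s) } is bounded. -/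
/-- With three of the four coordinates fixed, the error term of the growth bound grows at most
linearly: each of the two powers of logarithms is eventually below a square root. -/
theorem LandscapeBound.linear_error {L : ℝ → ℝ → ℝ → ℝ → ℝ} {C : ℝ} (hC : 0 < C)
    (hL : LandscapeBound L C) (x s t : ℝ) (hst : s < t) :
    ∃ B : ℝ, 0 ≤ B ∧ ∀ᶠ y in Filter.cocompact ℝ,
      |L x s y t + (y - x) ^ 2 / (t - s)| ≤ B * (|y| + 1) := by
  have hd : 0 < t - s := sub_pos.2 hst
  set N : ℝ → ℝ := fun y => Real.sqrt (x ^ 2 + s ^ 2 + y ^ 2 + t ^ 2) with hN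
  have hyN : ∀ y, |y| ≤ N y := fun y =>
    Real.abs_le_sqrt (by nlinarith [sq_nonneg x, sq_nonneg s, sq_nonneg t])
  have hNy : ∀ y, N y ≤ |y| + (|x| + |s| + |t|) := by
    intro y
    apply Real.sqrt_le_iff.2 ⟨by positivity, ?_⟩
    rw [← sq_abs x, ← sq_abs s, ← sq_abs t, ← sq_abs y]
    have := abs_nonneg x
    have := abs_nonneg s
    have := abs_nonneg t
    have := abs_nonneg y
    nlinarith [mul_nonneg (abs_nonneg x) (abs_nonneg s), mul_nonneg (abs_nonneg x) (abs_nonneg t),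
      mul_nonneg (abs_nonneg x) (abs_nonneg y), mul_nonneg (abs_nonneg s) (abs_nonneg t),
      mul_nonneg (abs_nonneg s) (abs_nonneg y), mul_nonneg (abs_nonneg t) (abs_nonneg y)]
  have hNtop : Filter.Tendsto N (Filter.cocompact ℝ) Filter.atTop :=
    Filter.tendsto_atTop_mono hyN (tendsto_norm_cocompact_atTop (E := ℝ))
  have hu : Filter.Tendsto (fun y => N y + 2) (Filter.cocompact ℝ) Filter.atTop :=
    Filter.tendsto_atTop_add_const_right _ _ hNtop
  have hv : Filter.Tendsto (fun y => (2 * N y + 2) / (t - s)) (Filter.cocompact ℝ) Filter.atTop :=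
    (Filter.tendsto_atTop_add_const_right _ _
      (hNtop.const_mul_atTop (by norm_num : (0 : ℝ) < 2))).atTop_div_const hd
  have h1 : ∀ p : ℝ, ∀ᶠ z in Filter.atTop, ‖Real.log z ^ p‖ ≤ 1 * ‖z ^ ((1 : ℝ) / 2)‖ := fun p =>
    (isLittleO_log_rpow_rpow_atTop p (by norm_num : (0 : ℝ) < 1 / 2)).bound one_pos
  refine ⟨C * |t - s| ^ ((1 : ℝ) / 3) * (2 / (t - s)) ^ ((1 : ℝ) / 2) * (|x| + |s| + |t| + 2),
    by positivity, ?_⟩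
  filter_upwards [hv.eventually (h1 (4 / 3)), hu.eventually (h1 (2 / 3))] with y hy1 hy2
  have hn : 0 ≤ N y := Real.sqrt_nonneg _
  rw [one_mul, Real.norm_eq_abs, Real.norm_eq_abs,
    abs_of_nonneg (Real.rpow_nonneg (by positivity : (0 : ℝ) ≤ (2 * N y + 2) / (t - s)) _)] at hy1
  rw [one_mul, Real.norm_eq_abs, Real.norm_eq_abs,
    abs_of_nonneg (Real.rpow_nonneg (by positivity : (0 : ℝ) ≤ N y + 2) _)] at hy2
  have hv2 : ((2 * N y + 2) / (t - s)) ^ ((1 : ℝ) / 2)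
      ≤ (2 / (t - s)) ^ ((1 : ℝ) / 2) * (N y + 2) ^ ((1 : ℝ) / 2) := by
    rw [← Real.mul_rpow (by positivity) (by positivity)]
    apply Real.rpow_le_rpow (by positivity) _ (by norm_num)
    rw [div_mul_eq_mul_div]
    gcongr
    linarith
  have hsq : (N y + 2) ^ ((1 : ℝ) / 2) * (N y + 2) ^ ((1 : ℝ) / 2) = N y + 2 := by
    rw [← Real.rpow_add (by positivity)]
    norm_num
  have hlin : N y + 2 ≤ (|x| + |s| + |t| + 2) * (|y| + 1) := by
    have := hNy y
    nlinarith [abs_nonneg x, abs_nonneg s, abs_nonneg t, abs_nonneg y,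
      mul_nonneg (abs_nonneg x) (abs_nonneg y), mul_nonneg (abs_nonneg s) (abs_nonneg y),
      mul_nonneg (abs_nonneg t) (abs_nonneg y)]
  set a := Real.log ((2 * N y + 2) / (t - s)) ^ ((4 : ℝ) / 3) with ha
  set b := Real.log (N y + 2) ^ ((2 : ℝ) / 3) with hb
  have hab : a * b ≤ (2 / (t - s)) ^ ((1 : ℝ) / 2) * ((|x| + |s| + |t| + 2) * (|y| + 1)) :=
    calc a * b ≤ |a| * |b| := by rw [← abs_mul]; exact le_abs_self _
      _ ≤ ((2 / (t - s)) ^ ((1 : ℝ) / 2) * (N y + 2) ^ ((1 : ℝ) / 2)) *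
          (N y + 2) ^ ((1 : ℝ) / 2) :=
        mul_le_mul (hy1.trans hv2) hy2 (abs_nonneg _) (by positivity)
      _ = (2 / (t - s)) ^ ((1 : ℝ) / 2) * (N y + 2) := by rw [mul_assoc, hsq]
      _ ≤ _ := by gcongr
  calc _ ≤ C * |t - s| ^ ((1 : ℝ) / 3) * a * b := hL x s y t hst
    _ = C * |t - s| ^ ((1 : ℝ) / 3) * (a * b) := by ring
    _ ≤ C * |t - s| ^ ((1 : ℝ) / 3) *
        ((2 / (t - s)) ^ ((1 : ℝ) / 2) * ((|x| + |s| + |t| + 2) * (|y| + 1))) := by gcongr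
    _ = _ := by ring

/-- `|y|⁻¹(𝓛(x,s;y,t) + 𝔥(y,t)) → −∞` as `|y| → ∞`; consequently the set of
maximizers of `y ↦ 𝓛(x,s;y,t) + 𝔥(y,t)` is bounded. -/
theorem stmt_5 (L : ℝ → ℝ → ℝ → ℝ → ℝ) (C : ℝ) (hC : 0 < C)
    (hL : LandscapeBound L C) (h : ℝ → ℝ → ℝ) (hh : EternalSolution L h)
    (x s t : ℝ) (hst : s < t) :
    Filter.Tendsto (fun y : ℝ => (L x s y t + h y t) / |y|)
      (Filter.cocompact ℝ) Filter.atBot ∧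
    Bornology.IsBounded {y : ℝ | L x s y t + h y t = h x s} := by
  have hd : 0 < t - s := sub_pos.2 hst
  have habs : Filter.Tendsto (fun y : ℝ => |y|) (Filter.cocompact ℝ) Filter.atTop :=
    tendsto_norm_cocompact_atTop (E := ℝ)
  have hlim : Filter.Tendsto (fun y : ℝ => (L x s y t + h y t) / |y|)
      (Filter.cocompact ℝ) Filter.atBot := by
    obtain ⟨B₁, hB₁, h1⟩ := hL.linear_error hC x s t hst
    obtain ⟨B₂, hB₂, h2⟩ := hL.linear_error hC 0 (s - 1) t (by linarith)
    -- the gap between the two quadratic coefficients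
    set c : ℝ := 1 / (t - s) - 1 / (t - (s - 1)) with hc
    have hcpos : 0 < c := sub_pos.2 (one_div_lt_one_div_of_lt hd (by linarith))
    set K : ℝ := 2 * |x| / (t - s) + 2 * B₁ + 2 * B₂ + |h 0 (s - 1)| with hK
    have hg : Filter.Tendsto (fun y : ℝ => -(c * |y|) + K) (Filter.cocompact ℝ) Filter.atBot :=
      Filter.tendsto_atBot_add_const_right _ _
        (Filter.tendsto_neg_atTop_atBot.comp (habs.const_mul_atTop hcpos))
    refine Filter.tendsto_atBot_mono' _ ?_ hg
    filter_upwards [h1, h2, habs.eventually_ge_atTop 1] with y hy1 hy2 hy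
    have h3 : L 0 (s - 1) y t + h y t ≤ h 0 (s - 1) :=
      (hh 0 (s - 1) t (by linarith)).1 ⟨y, rfl⟩
    have h4 := (abs_le.1 hy1).2
    have h5 := (abs_le.1 hy2).1
    have h6 : -((y - x) ^ 2 / (t - s)) + (y - 0) ^ 2 / (t - (s - 1))
        ≤ -(c * |y| ^ 2) + 2 * |x| / (t - s) * |y| := by
      have e : -(c * |y| ^ 2) + 2 * |x| / (t - s) * |y|
          - (-((y - x) ^ 2 / (t - s)) + (y - 0) ^ 2 / (t - (s - 1)))
          = (2 * (|x| * |y| - x * y) + x ^ 2) / (t - s) := by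
        rw [hc, sq_abs]
        ring
      have : 0 ≤ (2 * (|x| * |y| - x * y) + x ^ 2) / (t - s) := by
        apply div_nonneg _ hd.le
        have := le_abs_self (x * y)
        rw [abs_mul] at this
        nlinarith [sq_nonneg x]
      linarith
    rw [div_le_iff₀ (by linarith)]
    have h7 := le_abs_self (h 0 (s - 1))
    have h8 := abs_nonneg (h 0 (s - 1))
    have e2 : (-(c * |y|) + K) * |y| = -(c * |y| ^ 2) + 2 * |x| / (t - s) * |y| +
        2 * B₁ * |y| + 2 * B₂ * |y| + |h 0 (s - 1)| * |y| := by
      rw [hK]; ring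
    rw [e2]
    nlinarith [mul_nonneg hB₁ (sub_nonneg.2 hy), mul_nonneg hB₂ (sub_nonneg.2 hy),
      mul_nonneg h8 (sub_nonneg.2 hy)]
  refine ⟨hlim, ?_⟩
  rw [Bornology.isBounded_def, Metric.cobounded_eq_cocompact]
  filter_upwards [hlim.eventually_lt_atBot (-|h x s|), habs.eventually_ge_atTop 1] with y hy1 hy2
  intro hy
  rw [Set.mem_ofPred_eq] at hy
  rw [hy, div_lt_iff₀ (by linarith)] at hy1
  nlinarith [neg_abs_le (h x s), abs_nonneg (h x s)]
end

section
/- Let 𝓛 be a passage-time kernel and fix (x₀,s₀) ∈ ℝ². Let 𝔥 be an eternal solution for 𝓛 with 𝔥(x₀,s₀) = 0. Call 𝔥 minimal if for every eternal solution g with g ≤ 𝔥 pointwise there exists a ∈ ℝ with 𝔥 = g + a. Call 𝔥 extremal if whenever 𝔥 = (f + a) ∨ (g + b) pointwise for eternal solutions f, g with f(x₀,s₀) = g(x₀,s₀) = 0 and reals a, b with a ∨ b = 0, one has f = g = 𝔥. Then 𝔥 is minimal if and only if 𝔥 is extremal. -/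
theorem EternalSolution.add_const {L : ℝ → ℝ → ℝ → ℝ → ℝ} {h : ℝ → ℝ → ℝ}
    (hh : EternalSolution L h) (c : ℝ) : EternalSolution L (fun x s => h x s + c) := by
  intro x s t hst
  obtain ⟨hub, hleast⟩ := hh x s t hst
  constructor
  · rintro v ⟨y, rfl⟩
    have := hub ⟨y, rfl⟩
    linarith
  · intro u hu
    have : h x s ≤ u - c := by
      apply hleast
      rintro v ⟨y, rfl⟩
      have := hu ⟨y, rfl⟩
      linarith
    linarith

/-- A minimal `h` equals any normalized eternal solution having a translate below `h`. -/
theorem eq_of_minimal {L : ℝ → ℝ → ℝ → ℝ → ℝ} {x₀ s₀ : ℝ} {h : ℝ → ℝ → ℝ} (h0 : h x₀ s₀ = 0)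
    (hmin : ∀ g : ℝ → ℝ → ℝ, EternalSolution L g → (∀ x s : ℝ, g x s ≤ h x s) →
        ∃ a : ℝ, ∀ x s : ℝ, h x s = g x s + a)
    {f : ℝ → ℝ → ℝ} {a : ℝ} (hf : EternalSolution L f) (f0 : f x₀ s₀ = 0)
    (hle : ∀ x s : ℝ, f x s + a ≤ h x s) : f = h := by
  obtain ⟨c, hc⟩ := hmin _ (hf.add_const a) hle
  have hc0 := hc x₀ s₀
  funext x s
  have := hc x s
  linarith

/-- A normalized eternal solution is minimal if and only if it is extremal. -/
theorem stmt_6 (L : ℝ → ℝ → ℝ → ℝ → ℝ) (x₀ s₀ : ℝ) (h : ℝ → ℝ → ℝ)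
    (hh : EternalSolution L h) (h0 : h x₀ s₀ = 0) :
    (∀ g : ℝ → ℝ → ℝ, EternalSolution L g → (∀ x s : ℝ, g x s ≤ h x s) →
        ∃ a : ℝ, ∀ x s : ℝ, h x s = g x s + a) ↔
    (∀ (f g : ℝ → ℝ → ℝ) (a b : ℝ), EternalSolution L f → EternalSolution L g →
        f x₀ s₀ = 0 → g x₀ s₀ = 0 → a ⊔ b = 0 →
        (∀ x s : ℝ, h x s = (f x s + a) ⊔ (g x s + b)) → f = h ∧ g = h) := by
  constructor
  · intro hmin f g a b hf hg f0 g0 _ heq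
    exact ⟨eq_of_minimal h0 hmin hf f0 fun x s => (heq x s).symm ▸ le_sup_left,
      eq_of_minimal h0 hmin hg g0 fun x s => (heq x s).symm ▸ le_sup_right⟩
  · intro hext g hg hle
    have hb : g x₀ s₀ ≤ 0 := h0 ▸ hle x₀ s₀
    obtain ⟨-, hgh⟩ := hext h (fun x s => g x s + -g x₀ s₀) 0 (g x₀ s₀) hh (hg.add_const _) h0
      (by simp) (sup_eq_left.2 hb) (fun x s => by simp [hle x s])
    exact ⟨-g x₀ s₀, fun x s => (congrFun (congrFun hgh x) s).symm⟩
end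

section
/- Let B⁻, B⁺ : ℝ × ℝ → ℝ be cocycles such that B⁺(x,y) ≤ B⁻(x,y) whenever x < y. Fix x₀ ∈ ℝ and a_−, a_+ ∈ ℝ ∪ {−∞} not both equal to −∞, and define h(x) = (B⁻(x,x₀) + a_−) ∨ (B⁺(x,x₀) + a_+). Then for all x < y: B⁻(y,x) ≤ h(y) − h(x) ≤ B⁺(y,x). If, in addition, there is θ ∈ ℝ such that (y−x)^{−1} B^σ(y,x) → 2θ as y − x → ∞ for both σ ∈ {−,+}, then (y−x)^{−1} (h(y) − h(x)) → 2θ as y − x → ∞. -/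
/-!
For `x < y` antisymmetry turns the ordering into `Bm y x ≤ Bp y x`. By the cocycle property each of
the two terms of the maximum `h y` is the corresponding term of `h x` plus `Bm y x` or `Bp y x`, so
`h x + Bm y x ≤ h y ≤ h x + Bp y x`. Since `am` and `ap` are not both `⊥` and neither is `⊤`, `h` is
finite, so these are inequalities between real numbers (`exists_real_sandwich`). Dividing by
`y - x > 0` squeezes the growth rate of `h` between those of `Bm` and `Bp`.
-/

/-- A cocycle on ℝ. -/
def Cocycle (B : ℝ → ℝ → ℝ) : Prop := ∀ x y z : ℝ, B x z + B z y = B x y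

theorem Cocycle.swap {B : ℝ → ℝ → ℝ} (hB : Cocycle B) (x y : ℝ) : B y x = -B x y := by
  have h1 := hB x x x
  have h2 := hB x x y
  linarith

/-- The max-plus combination is real-valued, and its increments are sandwiched between those of the
two cocycles. -/
theorem exists_real_sandwich (Bm Bp : ℝ → ℝ → ℝ) (hBm : Cocycle Bm) (hBp : Cocycle Bp)
    (hord : ∀ x y : ℝ, x < y → Bp x y ≤ Bm x y)
    (x₀ : ℝ) (am ap : EReal) (ham : am ≠ ⊤) (hap : ap ≠ ⊤)
    (hne : ¬(am = ⊥ ∧ ap = ⊥))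
    (h : ℝ → EReal)
    (hdef : ∀ x : ℝ, h x = max ((Bm x x₀ : EReal) + am) ((Bp x x₀ : EReal) + ap)) :
    ∃ g : ℝ → ℝ, (∀ x, h x = (g x : EReal)) ∧
      ∀ x y : ℝ, x < y → Bm y x ≤ g y - g x ∧ g y - g x ≤ Bp y x := by
  have key : ∀ x y : ℝ, x < y → Bm y x ≤ Bp y x := fun x y hxy => by
    rw [hBm.swap x y, hBp.swap x y]
    linarith [hord x y hxy]
  induction am with
  | top => exact absurd rfl ham
  | bot =>
    induction ap with
    | top => exact absurd rfl hap
    | bot => exact absurd ⟨rfl, rfl⟩ hne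
    | coe b =>
      refine ⟨fun x => Bp x x₀ + b, fun x => by simp [hdef], fun x y hxy => ?_⟩
      have h1 := hBp y x₀ x
      have h2 := key x y hxy
      constructor <;> dsimp only <;> linarith
  | coe a =>
    induction ap with
    | top => exact absurd rfl hap
    | bot =>
      refine ⟨fun x => Bm x x₀ + a, fun x => by simp [hdef], fun x y hxy => ?_⟩
      have h1 := hBm y x₀ x
      have h2 := key x y hxy
      constructor <;> dsimp only <;> linarith
    | coe b =>
      refine ⟨fun x => max (Bm x x₀ + a) (Bp x x₀ + b),
        fun x => by rw [hdef, EReal.coe_strictMono.monotone.map_max, EReal.coe_add, EReal.coe_add],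
        fun x y hxy => ?_⟩
      have h1 := hBm y x₀ x
      have h2 := hBp y x₀ x
      have h3 := key x y hxy
      dsimp only
      constructor
      · rw [le_sub_iff_add_le', ← le_sub_iff_add_le]
        apply max_le
        · linarith [le_max_left (Bm y x₀ + a) (Bp y x₀ + b)]
        · linarith [le_max_right (Bm y x₀ + a) (Bp y x₀ + b)]
      · rw [sub_le_iff_le_add]
        apply max_le
        · linarith [le_max_left (Bm x x₀ + a) (Bp x x₀ + b)]
        · linarith [le_max_right (Bm x x₀ + a) (Bp x x₀ + b)]

/-- Max-plus convex combinations of two ordered cocycles: the increments of the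
combination are sandwiched between the increments of the cocycles, and if both
cocycles have growth rate `2θ` then so does the combination. -/
theorem stmt_8 (Bm Bp : ℝ → ℝ → ℝ) (hBm : Cocycle Bm) (hBp : Cocycle Bp)
    (hord : ∀ x y : ℝ, x < y → Bp x y ≤ Bm x y)
    (x₀ : ℝ) (am ap : EReal) (ham : am ≠ ⊤) (hap : ap ≠ ⊤)
    (hne : ¬(am = ⊥ ∧ ap = ⊥))
    (h : ℝ → EReal)
    (hdef : ∀ x : ℝ, h x = max ((Bm x x₀ : EReal) + am) ((Bp x x₀ : EReal) + ap)) :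
    (∀ x y : ℝ, x < y →
      (Bm y x : EReal) ≤ h y - h x ∧ h y - h x ≤ (Bp y x : EReal)) ∧
    (∀ θ : ℝ,
      (∀ ε : ℝ, 0 < ε → ∃ M : ℝ, ∀ x y : ℝ, M ≤ y - x →
        |Bm y x / (y - x) - 2 * θ| ≤ ε ∧ |Bp y x / (y - x) - 2 * θ| ≤ ε) →
      ∀ ε : ℝ, 0 < ε → ∃ M : ℝ, ∀ x y : ℝ, M ≤ y - x →
        |(h y - h x).toReal / (y - x) - 2 * θ| ≤ ε) := by
  obtain ⟨g, hg, hs⟩ := exists_real_sandwich Bm Bp hBm hBp hord x₀ am ap ham hap hne h hdef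
  have hsub : ∀ x y, h y - h x = ((g y - g x : ℝ) : EReal) := fun x y => by
    rw [hg, hg, EReal.coe_sub]
  refine ⟨fun x y hxy => ?_, fun θ hθ ε hε => ?_⟩
  · rw [hsub]
    exact_mod_cast hs x y hxy
  · obtain ⟨M, hM⟩ := hθ ε hε
    -- Replacing `M` by `max M 1` forces `0 < y - x`.
    refine ⟨max M 1, fun x y hxy => ?_⟩
    have hpos : 0 < y - x := by linarith [le_max_right M 1]
    obtain ⟨h1, h2⟩ := hM x y ((le_max_left M 1).trans hxy)
    obtain ⟨h3, h4⟩ := hs x y (by linarith)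
    rw [hsub, EReal.toReal_coe]
    rw [abs_le] at h1 h2 ⊢
    have h5 := div_le_div_of_nonneg_right h3 hpos.le
    have h6 := div_le_div_of_nonneg_right h4 hpos.le
    constructor <;> linarith
end

section
/- Let 𝓛 be a superadditive passage-time kernel. Fix (x₀,s₀) ∈ ℝ² and let (z_n, r_n) ∈ ℝ² be a sequence with r_n → ∞ such that the functions (x,s) ↦ 𝓛(x,s;z_n,r_n) − 𝓛(x₀,s₀;z_n,r_n) converge pointwise on ℝ² to a function 𝔥 : ℝ² → ℝ. Then for all x ∈ ℝ and all s < t, sup_{y∈ℝ} { 𝓛(x,s;y,t) + 𝔥(y,t) } ≤ 𝔥(x,s). -/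
/-- Superadditivity of a passage-time kernel. -/
def Superadditive (L : ℝ → ℝ → ℝ → ℝ → ℝ) : Prop :=
  ∀ x y z r s t : ℝ, r < s → s < t → L x r y s + L y s z t ≤ L x r z t

/-- Pointwise limits of centered passage times of a superadditive kernel are
supersolutions of the update equation. -/
theorem stmt_14 (L : ℝ → ℝ → ℝ → ℝ → ℝ) (hsuper : Superadditive L)
    (x₀ s₀ : ℝ) (z r : ℕ → ℝ)
    (hr : Filter.Tendsto r Filter.atTop Filter.atTop)
    (h : ℝ → ℝ → ℝ)
    (hconv : ∀ x s : ℝ,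
      Filter.Tendsto (fun n => L x s (z n) (r n) - L x₀ s₀ (z n) (r n))
        Filter.atTop (nhds (h x s))) :
    ∀ x s t y : ℝ, s < t → L x s y t + h y t ≤ h x s := by
  intro x s t y hst
  refine le_of_tendsto_of_tendsto ((hconv y t).const_add (L x s y t)) (hconv x s) ?_
  -- Superadditivity through `(y, t)` applies once `r n` has passed the time `t`.
  filter_upwards [hr.eventually_gt_atTop t] with n hn
  have := hsuper x y (z n) s t (r n) hst hn
  linarith
end

section
/- Let 𝓛 be a superadditive passage-time kernel that is continuous on its domain {(x,s,y,t) ∈ ℝ⁴ : s < t}. Fix (x₀,s₀) ∈ ℝ² and let (z_n, r_n) ∈ ℝ² be a sequence with r_n → ∞ such that the functions (x,s) ↦ 𝓛(x,s;z_n,r_n) − 𝓛(x₀,s₀;z_n,r_n) converge locally uniformly on ℝ² to a function 𝔥 : ℝ² → ℝ. Assume moreover that for every x ∈ ℝ and every s < t there is a bounded sequence (y_n) of reals such that, for all n with r_n > t, 𝓛(x,s;y_n,t) + 𝓛(y_n,t;z_n,r_n) = 𝓛(x,s;z_n,r_n). Then 𝔥 is an eternal solution for 𝓛 and 𝔥(x₀,s₀)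 = 0. -/
/-- Horofunctions (locally uniform limits of centered passage times) are eternal
solutions normalized to vanish at the centering point. -/
theorem stmt_15 (L : ℝ → ℝ → ℝ → ℝ → ℝ) (hsuper : Superadditive L)
    (hcont : ContinuousOn (fun p : ℝ × ℝ × ℝ × ℝ => L p.1 p.2.1 p.2.2.1 p.2.2.2)
      {p : ℝ × ℝ × ℝ × ℝ | p.2.1 < p.2.2.2})
    (x₀ s₀ : ℝ) (z rr : ℕ → ℝ)
    (hr : Filter.Tendsto rr Filter.atTop Filter.atTop)
    (h : ℝ → ℝ → ℝ)
    (hconv : TendstoLocallyUniformly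
      (fun n (p : ℝ × ℝ) => L p.1 p.2 (z n) (rr n) - L x₀ s₀ (z n) (rr n))
      (fun p : ℝ × ℝ => h p.1 p.2) Filter.atTop)
    (hgeod : ∀ x s t : ℝ, s < t → ∃ y : ℕ → ℝ, (∃ M : ℝ, ∀ n, |y n| ≤ M) ∧
      ∀ n, t < rr n → L x s (y n) t + L (y n) t (z n) (rr n) = L x s (z n) (rr n)) :
    EternalSolution L h ∧ h x₀ s₀ = 0 := by
  have hpt : ∀ x s : ℝ, Filter.Tendsto
      (fun n => L x s (z n) (rr n) - L x₀ s₀ (z n) (rr n)) Filter.atTop (nhds (h x s)) :=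
    fun x s => (hconv.tendstoLocallyUniformlyOn (s := Set.univ)).tendsto_at (Set.mem_univ (x, s))
  refine ⟨fun x s t hst => ⟨?_, ?_⟩, ?_⟩
  · rintro v ⟨y, rfl⟩
    refine le_of_tendsto_of_tendsto ((hpt y t).const_add (L x s y t)) (hpt x s) ?_
    filter_upwards [hr.eventually_gt_atTop t] with n hn
    have := hsuper x y (z n) s t (rr n) hst hn
    linarith
  · intro b hb
    obtain ⟨y, ⟨M, hM⟩, hy⟩ := hgeod x s t hst
    have hK : IsCompact (Set.Icc (-M) M ×ˢ ({t} : Set ℝ)) := isCompact_Icc.prod isCompact_singleton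
    have hunif := (tendstoLocallyUniformlyOn_iff_tendstoUniformlyOn_of_compact hK).1
      hconv.tendstoLocallyUniformlyOn
    refine le_of_forall_pos_le_add fun ε hε => ?_
    refine le_of_tendsto (hpt x s) ?_
    filter_upwards [hr.eventually_gt_atTop t, Metric.tendstoUniformlyOn_iff.1 hunif ε hε]
      with n hn hclose
    have hdist := hclose (y n, t) ⟨abs_le.1 (hM n), rfl⟩
    rw [Real.dist_eq, abs_lt] at hdist
    have hbound : L x s (y n) t + h (y n) t ≤ b := hb ⟨y n, rfl⟩
    have hsplit := hy n hn
    dsimp only at hdist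
    linarith [hdist.1]
  · exact tendsto_nhds_unique (hpt x₀ s₀) (by simp)
end

section
/- Let 𝓛 be a passage-time kernel continuous on its domain {(x,s,y,t) ∈ ℝ⁴ : s < t}, and let 𝔥 be an eternal solution for 𝓛 such that x ↦ 𝔥(x,t) is continuous for each t ∈ ℝ. If γ_n : [s,∞) → ℝ² is a sequence of 𝔥-geodesics converging pointwise to a space-time path γ : [s,∞) → ℝ², then γ is an 𝔥-geodesic. -/
/-- An `𝔥`-geodesic on `[s,∞)`: a space-time path along which the passage time equals
the decrement of `𝔥`. -/
def IsHGeodesic (L : ℝ → ℝ → ℝ → ℝ → ℝ) (h : ℝ → ℝ → ℝ) (s : ℝ)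
    (γ : ℝ → ℝ × ℝ) : Prop :=
  (∀ t : ℝ, s ≤ t → (γ t).2 = t) ∧
  ∀ r t : ℝ, s ≤ r → r < t → L (γ r).1 r (γ t).1 t = h (γ r).1 r - h (γ t).1 t

/-- Pointwise limits of `𝔥`-geodesics are `𝔥`-geodesics, given continuity of the kernel
on its domain and spatial continuity of `𝔥`. -/
theorem stmt_16 (L : ℝ → ℝ → ℝ → ℝ → ℝ)
    (hcont : ContinuousOn (fun p : ℝ × ℝ × ℝ × ℝ => L p.1 p.2.1 p.2.2.1 p.2.2.2)
      {p : ℝ × ℝ × ℝ × ℝ | p.2.1 < p.2.2.2})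
    (h : ℝ → ℝ → ℝ) (hh : EternalSolution L h)
    (hhc : ∀ t : ℝ, Continuous fun x => h x t)
    (s : ℝ) (γn : ℕ → ℝ → ℝ × ℝ) (γ : ℝ → ℝ × ℝ)
    (hγn : ∀ n, IsHGeodesic L h s (γn n))
    (hγpath : ∀ t : ℝ, s ≤ t → (γ t).2 = t)
    (hlim : ∀ t : ℝ, s ≤ t → Filter.Tendsto (fun n => γn n t) Filter.atTop (nhds (γ t))) :
    IsHGeodesic L h s γ := by
  -- For fixed times `r < t`, pass to the limit on both sides of the geodesic identity
  -- for `γn n`: the left by continuity of `L`, the right by continuity of `h · r` and `h · t`.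
  refine ⟨hγpath, fun r t hr hrt => ?_⟩
  have hr_lim := (hlim r hr).fst_nhds
  have ht_lim := (hlim t (hr.trans hrt.le)).fst_nhds
  have hopen : IsOpen {p : ℝ × ℝ × ℝ × ℝ | p.2.1 < p.2.2.2} :=
    isOpen_lt (by fun_prop) (by fun_prop)
  have hL : Filter.Tendsto (fun n => L (γn n r).1 r (γn n t).1 t) Filter.atTop
      (nhds (L (γ r).1 r (γ t).1 t)) :=
    (hcont.continuousAt (x := ((γ r).1, r, (γ t).1, t)) (hopen.mem_nhds hrt)).tendsto.comp
      (hr_lim.prodMk_nhds (tendsto_const_nhds.prodMk_nhds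
        (ht_lim.prodMk_nhds tendsto_const_nhds)))
  have hR : Filter.Tendsto (fun n => h (γn n r).1 r - h (γn n t).1 t) Filter.atTop
      (nhds (h (γ r).1 r - h (γ t).1 t)) :=
    (((hhc r).tendsto _).comp hr_lim).sub (((hhc t).tendsto _).comp ht_lim)
  exact tendsto_nhds_unique hL (hR.congr fun n => ((hγn n).2 r t hr hrt).symm)
end

section
/- Let J be a nonempty set, and for each j ∈ J let W_j : ℝ → ℝ and θ_j ∈ ℝ satisfy lim_{|z|→∞} z^{−1} W_j(z) = 2θ_j. Let a_j ∈ [−∞,∞) and suppose that h(z) = sup_{j∈J} (W_j(z) + a_j) is finite for every z ∈ ℝ and satisfies lim_{|z|→∞} z^{−1} h(z) = 2θ for some θ ∈ ℝ. Then θ_j = θ for every j ∈ J with a_j > −∞; consequently h(z) = sup_{ j ∈ J : θ_j = θ } (W_j(z) + a_j) for all z ∈ ℝ. -/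
/-!
If `a j` is finite, then `W j + a j ≤ h` pointwise. Dividing by `z` and letting `z → +∞` gives
`2 * θj j ≤ 2 * θ`; letting `z → -∞`, where the division reverses the inequality, gives
`2 * θ ≤ 2 * θj j`. So every index with `θj j ≠ θ` has `a j = ⊥`, its term in the supremum is `⊥`,
and it can be dropped.
-/

/-- If `f + c ≤ g`, and `f` and `g` have two-sided growth rates `p` and `q`, then `p = q`: the
limit at `+∞` gives `p ≤ q` and the limit at `-∞` gives `q ≤ p`. -/
theorem growth_rate_eq_of_add_le {f g : ℝ → ℝ} {c p q : ℝ} (hle : ∀ z, f z + c ≤ g z)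
    (hf : Filter.Tendsto (fun z : ℝ => f z / z) (Filter.cocompact ℝ) (nhds p))
    (hg : Filter.Tendsto (fun z : ℝ => g z / z) (Filter.cocompact ℝ) (nhds q)) : p = q := by
  rw [cocompact_eq_atBot_atTop, Filter.tendsto_sup] at hf hg
  apply le_antisymm
  · have hc : Filter.Tendsto (fun z : ℝ => f z / z + c / z) Filter.atTop (nhds p) := by
      simpa using hf.2.add (Filter.tendsto_id.const_div_atTop c)
    refine le_of_tendsto_of_tendsto hc hg.2 ?_
    filter_upwards [Filter.eventually_gt_atTop 0] with z hz
    rw [← add_div]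
    exact div_le_div_of_nonneg_right (hle z) hz.le
  · have hc : Filter.Tendsto (fun z : ℝ => f z / z + c / z) Filter.atBot (nhds p) := by
      simpa using hf.1.add (Filter.tendsto_id.const_div_atBot c)
    refine le_of_tendsto_of_tendsto hg.1 hc ?_
    filter_upwards [Filter.eventually_lt_atBot 0] with z hz
    rw [← add_div]
    exact div_le_div_of_nonpos_of_le hz.le (hle z)

/-- If `h = sup_j (W_j + a_j)` is finite with growth rate `2θ`, then only indices `j`
with `θ_j = θ` contribute (those with `a_j > −∞`), and the representation can be
restricted to them. -/
theorem stmt_17 {J : Type*} [Nonempty J] (W : J → ℝ → ℝ) (θj : J → ℝ)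
    (hW : ∀ j, Filter.Tendsto (fun z : ℝ => W j z / z) (Filter.cocompact ℝ)
      (nhds (2 * θj j)))
    (a : J → EReal) (ha : ∀ j, a j ≠ ⊤)
    (h : ℝ → ℝ)
    (hdef : ∀ z : ℝ, (h z : EReal) = ⨆ j, ((W j z : EReal) + a j))
    (θ : ℝ)
    (hgrowth : Filter.Tendsto (fun z : ℝ => h z / z) (Filter.cocompact ℝ)
      (nhds (2 * θ))) :
    (∀ j, a j ≠ ⊥ → θj j = θ) ∧
    ∀ z : ℝ, (h z : EReal) = ⨆ j : {j : J // θj j = θ}, ((W j.1 z : EReal) + a j.1) := by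
  have key : ∀ j, a j ≠ ⊥ → θj j = θ := by
    intro j hj
    have hle : ∀ z, W j z + (a j).toReal ≤ h z := by
      intro z
      rw [← EReal.coe_le_coe_iff, EReal.coe_add, EReal.coe_toReal (ha j) hj, hdef z]
      exact le_iSup (fun j => (W j z : EReal) + a j) j
    linarith [growth_rate_eq_of_add_le hle (hW j) hgrowth]
  refine ⟨key, fun z => ?_⟩
  rw [hdef z]
  apply le_antisymm
  · refine iSup_le fun j => ?_
    by_cases hj : a j = ⊥
    · simp [hj]
    · exact le_iSup (fun j : {j : J // θj j = θ} => (W j.1 z : EReal) + a j.1) ⟨j, key j hj⟩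
  · exact iSup_le fun j => le_iSup (fun j => (W j z : EReal) + a j) j.1
end

section
/- Let d be a positive integer and let S ⊆ ℝ^d be nonempty. Let f_n, f, g : S → ℝ satisfy: (i) f_n → f uniformly on S ∩ K for every compact K ⊆ ℝ^d; (ii) f_n(x) ≤ g(x) for all x ∈ S and all n; (iii) g(x) → −∞ as |x| → ∞ within S, i.e. for every b ∈ ℝ there is R > 0 with g(x) ≤ b whenever x ∈ S and |x| ≥ R. Then sup_{x∈S} f_n(x) → sup_{x∈S} f(x), where the suprema are taken in (−∞,∞]: if sup_S f = +∞ then sup_S f_n → +∞, and if sup_S f is finite then sup_S f_n is eventually finite and converges to sup_S f. -/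
/-!
Convergence in the order topology of `EReal` splits into two one-sided bounds. The lower bound
needs only pointwise convergence at a point where `flim` nearly attains its supremum. For the
upper bound, a level `c` strictly above `sup flim` dominates every `f n` outside a ball, and on
that compact ball uniform convergence keeps `f n` only slightly above `c`.
-/

/-- Max-plus dominated convergence: locally uniform convergence on `S` together with a
dominating function tending to `−∞` at infinity implies convergence of the suprema
(taken in the extended reals). -/
theorem stmt_18 (d : ℕ) (hd : 0 < d) (S : Set (EuclideanSpace ℝ (Fin d)))
    (hS : S.Nonempty)
    (f : ℕ → EuclideanSpace ℝ (Fin d) → ℝ) (flim g : EuclideanSpace ℝ (Fin d) → ℝ)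
    (hunif : ∀ K : Set (EuclideanSpace ℝ (Fin d)), IsCompact K →
      TendstoUniformlyOn f flim Filter.atTop (S ∩ K))
    (hdom : ∀ x ∈ S, ∀ n, f n x ≤ g x)
    (hg : ∀ b : ℝ, ∃ R : ℝ, 0 < R ∧ ∀ x ∈ S, R ≤ ‖x‖ → g x ≤ b) :
    Filter.Tendsto (fun n => ⨆ x : S, ((f n x : EReal))) Filter.atTop
      (nhds (⨆ x : S, ((flim x : EReal)))) := by
  rw [tendsto_order]
  constructor
  -- Lower semicontinuity: a single near-maximizing point of `flim` suffices.
  · intro a ha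
    obtain ⟨x, hx⟩ := lt_iSup_iff.1 ha
    have hpt : Filter.Tendsto (fun n => f n x) Filter.atTop (nhds (flim x)) :=
      (hunif {(x : EuclideanSpace ℝ (Fin d))} isCompact_singleton).tendsto_at
        ⟨x.2, Set.mem_singleton _⟩
    have hpt' : Filter.Tendsto (fun n => (f n x : EReal)) Filter.atTop
        (nhds (flim x : EReal)) :=
      (continuous_coe_real_ereal.tendsto _).comp hpt
    filter_upwards [hpt'.eventually_const_lt hx] with n hn
    exact hn.trans_le (le_iSup (fun y : S => (f n y : EReal)) x)
  -- Upper semicontinuity: with `sup flim < c < e < a`, domination gives `f n ≤ c` far out,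
  -- and uniform convergence with tolerance `e - c` gives `f n < e` on the remaining ball.
  · intro a ha
    obtain ⟨c, hc, hca⟩ := EReal.lt_iff_exists_real_btwn.1 ha
    obtain ⟨e, hce, hea⟩ := EReal.lt_iff_exists_real_btwn.1 hca
    have hce' : c < e := EReal.coe_lt_coe_iff.1 hce
    obtain ⟨R, -, hR⟩ := hg c
    have hu := Metric.tendstoUniformlyOn_iff.1
      (hunif (Metric.closedBall 0 R) (isCompact_closedBall 0 R)) (e - c) (sub_pos.2 hce')
    filter_upwards [hu] with n hn
    refine lt_of_le_of_lt (iSup_le fun x => EReal.coe_le_coe_iff.2 ?_) hea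
    rcases le_total R ‖(x : EuclideanSpace ℝ (Fin d))‖ with h | h
    · exact ((hdom x x.2 n).trans (hR x x.2 h)).trans hce'.le
    · have hdist := hn x ⟨x.2, mem_closedBall_zero_iff.2 h⟩
      have hlim : flim x < c := EReal.coe_lt_coe_iff.1
        ((le_iSup (fun y : S => (flim y : EReal)) x).trans_lt hc)
      rw [Real.dist_eq, abs_lt] at hdist
      linarith [hdist.1]
end
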